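/- Consider a linear dynamical system with sequences x, u, w, z, y and matrices A, B, C, D satisfying x_{t+1} = A x_t + B u_t + w_t and y_t = C x_t + D u_t + z_t for all t ≥ 0. Fix integers k, s ≥ 1, matrices α_1, …, α_s ∈ ℝ^{m×m}, and an integer t ≥ s, and set ŷ_{t+k} = y_{t+k} − Σ_{j=1}^{s} α_j y_{t−j}. Then ŷ_{t+k} = ( z_{t+k} − Σ_{j=1}^{s} α_j z_{t−j} ) + ( D u_{t+k} − Σ_{j=1}^{s} α_j D u_{t−j} ) + F_{α,k}(A) A^{t−s} x_0 + Σ_{i=1}^{k+s} F_{α,k}^{(i−1)}(A)(B u_{t+k−i} + w_{t+k−i}) + Σ_{i=k+s+1}^{t+k} F_{α,k}(A) A^{i−(k+s+1)} (B u_{t+k−i} + w_{t+k−i}). -/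

import Mathlib

/-- The matrix polynomial `F_{α,k}(A) = C A^{s+k} − α₁ C A^{s−1} − α₂ C A^{s−2} − ⋯ − α_s C`. -/
def Fmat {m n : ℕ} (C : Matrix (Fin m) (Fin n) ℝ) (A : Matrix (Fin n) (Fin n) ℝ)
    (α : ℕ → Matrix (Fin m) (Fin m) ℝ) (s k : ℕ) : Matrix (Fin m) (Fin n) ℝ :=
  C * A ^ (s + k) - ∑ j ∈ Finset.Icc 1 s, α j * C * A ^ (s - j)

/-- The truncated matrix polynomial `F_{α,k}^{(i)}(A)`, equal to `C A^i` for `0 ≤ i ≤ k` and to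
`C A^i − ∑_{j=1}^{i−k} α_j C A^{i−k−j}` for `k+1 ≤ i ≤ k+s`. -/
def FmatTrunc {m n : ℕ} (C : Matrix (Fin m) (Fin n) ℝ) (A : Matrix (Fin n) (Fin n) ℝ)
    (α : ℕ → Matrix (Fin m) (Fin m) ℝ) (k i : ℕ) : Matrix (Fin m) (Fin n) ℝ :=
  if i ≤ k then C * A ^ i
  else C * A ^ i - ∑ j ∈ Finset.Icc 1 (i - k), α j * C * A ^ (i - k - j)

/-!
The state at time `t - s` carries everything that happened before it. Unrolling the recursion from
`x (t - s)` up to each of the times `t + k`, `t - 1`, …, `t - s` shows that `x (t - s)` enters the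
stabilized observation through `F_{α,k}(A)`, while an input at lag `i ≤ k + s` enters through
`F_{α,k}^{(i-1)}(A)`: only the delayed states that come after the input see it, which is what
truncates the sum over `j`. Unrolling `x (t - s)` down to `x 0` gives the terms of larger lag. Both
families are one, since `F_{α,k} = F_{α,k}^{(k+s)}`.
-/

open Finset Matrix

section Semiring

variable {R ι κ : Type*} [Semiring R] [Fintype ι] [DecidableEq ι] [Fintype κ]

/-- Lags `i` are counted back from the later time `τ + N`, so that the expansions of states at
different times run over the same inputs and can be added term by term. -/
theorem state_eq_pow_mulVec_add_sum {A : Matrix ι ι R} {x v : ℕ → ι → R}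
    (hx : ∀ t, x (t + 1) = A *ᵥ x t + v t) (τ : ℕ) {d r N : ℕ} (hN : d + r = N) :
    x (τ + r) = A ^ r *ᵥ x τ + ∑ i ∈ Icc (d + 1) N, A ^ (i - (d + 1)) *ᵥ v (τ + N - i) := by
  induction r generalizing d with
  | zero => simp [← hN]
  | succ r ih =>
    have shift : ∑ i ∈ Icc (d + 1 + 1) N, A *ᵥ A ^ (i - (d + 1 + 1)) *ᵥ v (τ + N - i) =
        ∑ i ∈ Icc (d + 1 + 1) N, A ^ (i - (d + 1)) *ᵥ v (τ + N - i) := by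
      refine sum_congr rfl fun i hi ↦ ?_
      rw [mulVec_mulVec, ← pow_succ', show i - (d + 1 + 1) + 1 = i - (d + 1) by grind]
    rw [← add_assoc, hx, ih (d := d + 1) (by lia), mulVec_add, mulVec_mulVec, ← pow_succ',
      mulVec_sum, shift, Icc_add_one_left_eq_Ioc (d + 1), ← add_sum_Ioc_eq_sum_Icc (by lia),
      Nat.sub_self, pow_zero, one_mulVec, show τ + N - (d + 1) = τ + r by lia]
    abel

theorem sum_mulVec_delayed_state {C : Matrix κ ι R} {A : Matrix ι ι R} {x v : ℕ → ι → R}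
    (hx : ∀ t, x (t + 1) = A *ᵥ x t + v t) (α : ℕ → Matrix κ κ R) (τ k s : ℕ) :
    ∑ j ∈ Icc 1 s, α j *ᵥ C *ᵥ x (τ + (s - j)) =
      (∑ j ∈ Icc 1 s, α j * C * A ^ (s - j)) *ᵥ x τ
      + ∑ i ∈ Icc 1 (k + s),
          (∑ j ∈ Icc 1 (i - 1 - k), α j * C * A ^ (i - 1 - k - j)) *ᵥ v (τ + (k + s) - i) := by
  have unroll : ∀ j ∈ Icc 1 s, α j *ᵥ C *ᵥ x (τ + (s - j)) =
      (α j * C * A ^ (s - j)) *ᵥ x τ + ∑ i ∈ Icc (k + j + 1) (k + s),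
        (α j * C * A ^ (i - 1 - k - j)) *ᵥ v (τ + (k + s) - i) := by
    intro j hj
    rw [state_eq_pow_mulVec_add_sum hx τ (d := k + j) (N := k + s) (by grind)]
    have exponent (i : ℕ) : i - (k + j + 1) = i - 1 - k - j := by lia
    simp only [exponent, mulVec_add, mulVec_sum, mulVec_mulVec, Matrix.mul_assoc]
  simp only [sum_congr rfl unroll, sum_add_distrib, sum_mulVec]
  congr 1
  exact sum_comm' (by grind)

end Semiring

section Ring

variable {R ι κ π : Type*} [Ring R] [Fintype ι] [DecidableEq ι] [Fintype κ] [Fintype π]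

/-- The coefficient `F_{α,k}^{(i)}(A)` through which the state enters the stabilized observation `i`
steps later, for `i ≤ k + s`. When `i ≤ k`, truncated subtraction makes the sum empty, so that both
cases of `F_{α,k}^{(i)}(A)` are covered. -/
def stabilizedResponse (C : Matrix κ ι R) (A : Matrix ι ι R) (α : ℕ → Matrix κ κ R) (k i : ℕ) :
    Matrix κ ι R :=
  C * A ^ i - ∑ j ∈ Icc 1 (i - k), α j * C * A ^ (i - k - j)

theorem stabilized_state_eq {C : Matrix κ ι R} {A : Matrix ι ι R} {x v : ℕ → ι → R}
    (hx : ∀ t, x (t + 1) = A *ᵥ x t + v t) (α : ℕ → Matrix κ κ R) (τ k s : ℕ) :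
    C *ᵥ x (τ + (k + s)) - ∑ j ∈ Icc 1 s, α j *ᵥ C *ᵥ x (τ + (s - j)) =
      stabilizedResponse C A α k (k + s) *ᵥ x τ
      + ∑ i ∈ Icc 1 (k + s), stabilizedResponse C A α k (i - 1) *ᵥ v (τ + (k + s) - i) := by
  rw [sum_mulVec_delayed_state hx α τ k s, state_eq_pow_mulVec_add_sum hx τ (zero_add (k + s))]
  simp only [stabilizedResponse, sub_mulVec, sum_sub_distrib, mulVec_add, mulVec_sum,
    mulVec_mulVec, zero_add, Nat.add_sub_cancel_left]
  abel

theorem stabilized_state_eq_initial {C : Matrix κ ι R} {A : Matrix ι ι R} {x v : ℕ → ι → R}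
    (hx : ∀ t, x (t + 1) = A *ᵥ x t + v t) (α : ℕ → Matrix κ κ R) (k : ℕ) {s t : ℕ} (ht : s ≤ t) :
    C *ᵥ x (t + k) - ∑ j ∈ Icc 1 s, α j *ᵥ C *ᵥ x (t - j) =
      (stabilizedResponse C A α k (k + s) * A ^ (t - s)) *ᵥ x 0
      + ∑ i ∈ Icc 1 (k + s), stabilizedResponse C A α k (i - 1) *ᵥ v (t + k - i)
      + ∑ i ∈ Icc (k + s + 1) (t + k),
          (stabilizedResponse C A α k (k + s) * A ^ (i - (k + s + 1))) *ᵥ v (t + k - i) := by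
  have initial := state_eq_pow_mulVec_add_sum hx 0 (show k + s + (t - s) = t + k by lia)
  have recent := stabilized_state_eq (C := C) hx α (t - s) k s
  have delayed : ∑ j ∈ Icc 1 s, α j *ᵥ C *ᵥ x (t - s + (s - j)) =
      ∑ j ∈ Icc 1 s, α j *ᵥ C *ᵥ x (t - j) :=
    sum_congr rfl fun j hj ↦ by rw [show t - s + (s - j) = t - j by grind]
  rw [delayed, show t - s + (k + s) = t + k by lia] at recent
  simp only [zero_add] at initial
  rw [recent, initial]
  simp only [mulVec_add, mulVec_sum, mulVec_mulVec]
  abel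

theorem lds_stabilized_observation_formula_general
    {A : Matrix ι ι R} {B : Matrix ι π R} {C : Matrix κ ι R} {D : Matrix κ π R}
    {x w : ℕ → ι → R} {u : ℕ → π → R} {z y : ℕ → κ → R}
    (hx : ∀ t, x (t + 1) = A *ᵥ x t + B *ᵥ u t + w t)
    (hy : ∀ t, y t = C *ᵥ x t + D *ᵥ u t + z t)
    (α : ℕ → Matrix κ κ R) (k : ℕ) {s t : ℕ} (ht : s ≤ t) :
    y (t + k) - ∑ j ∈ Icc 1 s, α j *ᵥ y (t - j) =
      (z (t + k) - ∑ j ∈ Icc 1 s, α j *ᵥ z (t - j))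
      + (D *ᵥ u (t + k) - ∑ j ∈ Icc 1 s, α j *ᵥ D *ᵥ u (t - j))
      + (stabilizedResponse C A α k (k + s) * A ^ (t - s)) *ᵥ x 0
      + ∑ i ∈ Icc 1 (k + s),
          stabilizedResponse C A α k (i - 1) *ᵥ (B *ᵥ u (t + k - i) + w (t + k - i))
      + ∑ i ∈ Icc (k + s + 1) (t + k),
          (stabilizedResponse C A α k (k + s) * A ^ (i - (k + s + 1))) *ᵥ
            (B *ᵥ u (t + k - i) + w (t + k - i)) := by
  have state := stabilized_state_eq_initial (C := C) (v := fun t ↦ B *ᵥ u t + w t)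
    (fun t ↦ (hx t).trans (add_assoc ..)) α k ht
  simp only [hy, mulVec_add (α _), sum_add_distrib, sub_eq_iff_eq_add.mp state]
  abel

end Ring

section Real

variable {m n : ℕ} (C : Matrix (Fin m) (Fin n) ℝ) (A : Matrix (Fin n) (Fin n) ℝ)
  (α : ℕ → Matrix (Fin m) (Fin m) ℝ)

theorem Fmat_eq_stabilizedResponse (s k : ℕ) :
    Fmat C A α s k = stabilizedResponse C A α k (k + s) := by
  simp only [Fmat, stabilizedResponse, Nat.add_sub_cancel_left, add_comm s k]

theorem FmatTrunc_eq_stabilizedResponse (k i : ℕ) :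
    FmatTrunc C A α k i = stabilizedResponse C A α k i := by
  unfold FmatTrunc stabilizedResponse
  split_ifs with hi
  · simp [Nat.sub_eq_zero_of_le hi]
  · rfl

end Real

/-- For a linear dynamical system `x (t+1) = A x t + B u t + w t`,
`y t = C x t + D u t + z t`, integers `k, s ≥ 1`, matrices `α₁, …, α_s ∈ ℝ^{m×m}` and `t ≥ s`,
the stabilized observation `ŷ_{t+k} = y_{t+k} − ∑_{j=1}^{s} α_j y_{t−j}` satisfies the expansion
of Fact 5.7 of the paper. -/
theorem lds_stabilized_observation_formula (n p m : ℕ)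
    (A : Matrix (Fin n) (Fin n) ℝ) (B : Matrix (Fin n) (Fin p) ℝ)
    (C : Matrix (Fin m) (Fin n) ℝ) (D : Matrix (Fin m) (Fin p) ℝ)
    (x : ℕ → Fin n → ℝ) (u : ℕ → Fin p → ℝ) (w : ℕ → Fin n → ℝ)
    (z : ℕ → Fin m → ℝ) (y : ℕ → Fin m → ℝ)
    (hx : ∀ t : ℕ, x (t + 1) = A.mulVec (x t) + B.mulVec (u t) + w t)
    (hy : ∀ t : ℕ, y t = C.mulVec (x t) + D.mulVec (u t) + z t)
    (k s : ℕ) (hk : 1 ≤ k) (hs : 1 ≤ s)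
    (α : ℕ → Matrix (Fin m) (Fin m) ℝ)
    (t : ℕ) (ht : s ≤ t) :
    y (t + k) - ∑ j ∈ Finset.Icc 1 s, (α j).mulVec (y (t - j)) =
      (z (t + k) - ∑ j ∈ Finset.Icc 1 s, (α j).mulVec (z (t - j)))
      + (D.mulVec (u (t + k)) - ∑ j ∈ Finset.Icc 1 s, (α j).mulVec (D.mulVec (u (t - j))))
      + (Fmat C A α s k * A ^ (t - s)).mulVec (x 0)
      + ∑ i ∈ Finset.Icc 1 (k + s),
          (FmatTrunc C A α k (i - 1)).mulVec (B.mulVec (u (t + k - i)) + w (t + k - i))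
      + ∑ i ∈ Finset.Icc (k + s + 1) (t + k),
          (Fmat C A α s k * A ^ (i - (k + s + 1))).mulVec
            (B.mulVec (u (t + k - i)) + w (t + k - i)) := by
  simpa only [Fmat_eq_stabilizedResponse, FmatTrunc_eq_stabilizedResponse] using
    lds_stabilized_observation_formula_general hx hy α k ht
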